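/- Let α ∈ S_n be a maximal quasi-diagram with an isolated point i. Then the i-contraction δ_i(α) ∈ S_{n−1} is a maximal quasi-diagram, i.e. ζ_{n−1}·δ_i(α) has exactly one orbit on {1,…,n−1}. -/

import Mathlib

/-- The cycle `ϑ_{i,n} = (i, i+1, …, n)` of `S_n`; here `S_n` is realized as the permutations
of `Fin (m+1)` (with `n = m+1`), 0-indexed, and `a : Fin (m+1)` corresponds to `i`. -/
def vartheta {m : ℕ} (a : Fin (m + 1)) : Equiv.Perm (Fin (m + 1)) :=
  Fin.revPerm * (Fin.cycleRange a.rev)⁻¹ * Fin.revPerm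

/-- A permutation of `Fin m` regarded as a permutation of `Fin (m+1)` fixing the last point. -/
def castPerm {m : ℕ} (β : Equiv.Perm (Fin m)) : Equiv.Perm (Fin (m + 1)) :=
  β.viaFintypeEmbedding Fin.castSuccEmb

theorem vartheta_castSucc {m : ℕ} (a : Fin (m + 1)) (x : Fin m) :
    vartheta a x.castSucc = a.succAbove x := by
  have h : (Fin.cycleRange a.rev)⁻¹ (x.rev.succ) = a.rev.succAbove x.rev :=
    Fin.cycleRange_symm_succ _ _
  simp only [vartheta, Equiv.Perm.mul_apply, Fin.revPerm_apply, Fin.rev_castSucc]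
  rw [h, Fin.rev_succAbove]
  simp

theorem rot_val {m : ℕ} (x : Fin m) :
    ((finRotate m x : Fin m) : ℕ) = if (x : ℕ) + 1 = m then 0 else (x : ℕ) + 1 := by
  cases m with
  | zero => exact x.elim0
  | succ k =>
    rw [coe_finRotate]
    simp [Fin.ext_iff]

theorem rot_succAbove {n : ℕ} (a : Fin (n + 1)) (y : Fin n) :
    finRotate (n + 1) (a.succAbove y) = a.succAbove (finRotate n y) ∨
    (finRotate (n + 1) (a.succAbove y) = a ∧
      finRotate (n + 1) a = a.succAbove (finRotate n y)) := by
  have hs : ∀ z : Fin n, ((a.succAbove z : Fin (n + 1)) : ℕ) =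
      if (z : ℕ) < a then (z : ℕ) else (z : ℕ) + 1 := by
    intro z
    simp only [Fin.succAbove, Fin.lt_def, Fin.val_castSucc]
    split_ifs <;> simp
  simp only [Fin.ext_iff, rot_val, hs]
  have h1 := a.isLt
  have h2 := y.isLt
  split_ifs <;> omega

/-- Let `α ∈ S_n` (here permutations of `Fin (n+1)`, `n ≥ 1`, so the NL
size is `≥ 2`) be a maximal quasi-diagram with an isolated point `a`, and let `β = δ_a(α)`
be its contraction, i.e. the permutation of `Fin n` whose extension fixing the last point is
`ϑ⁻¹ α ϑ` (`ϑ = vartheta a`).  Then `β` is maximal: `ζ_n β` has exactly one orbit. -/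
theorem stmt_14 (n : ℕ) (hn : 0 < n) (α : Equiv.Perm (Fin (n + 1)))
    (hα : ∀ x, α (α x) = x) (a : Fin (n + 1)) (ha : α a = a)
    (hmax : ∀ x y : Fin (n + 1), (finRotate (n + 1) * α).SameCycle x y)
    (β : Equiv.Perm (Fin n))
    (hβ : castPerm β = (vartheta a)⁻¹ * α * vartheta a) :
    ∀ x y : Fin n, (finRotate n * β).SameCycle x y := by
  have hc : ∀ x, α (a.succAbove x) = a.succAbove (β x) := by
    intro x
    have h1 : castPerm β x.castSucc = (β x).castSucc :=
      Equiv.Perm.viaFintypeEmbedding_apply_image β Fin.castSuccEmb x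
    rw [hβ, Equiv.Perm.mul_apply, Equiv.Perm.mul_apply, Equiv.Perm.inv_eq_iff_eq,
      vartheta_castSucc, vartheta_castSucc] at h1
    exact h1
  have key : ∀ x, (finRotate (n + 1) * α) (a.succAbove x) = a.succAbove ((finRotate n * β) x) ∨
      ((finRotate (n + 1) * α) (a.succAbove x) = a ∧
        (finRotate (n + 1) * α) a = a.succAbove ((finRotate n * β) x)) := by
    intro x
    simp only [Equiv.Perm.mul_apply, hc, ha]
    exact rot_succAbove a (β x)
  generalize finRotate (n + 1) * α = f at *
  generalize finRotate n * β = g at *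
  intro x y
  have step : ∀ k : ℕ, (∃ z, g.SameCycle x z ∧ (f ^ k) (a.succAbove x) = a.succAbove z) ∨
      (∃ z, g.SameCycle x z ∧ (f ^ k) (a.succAbove x) = a ∧ f a = a.succAbove z) := by
    intro k
    induction k with
    | zero => exact Or.inl ⟨x, Equiv.Perm.SameCycle.refl _ _, rfl⟩
    | succ k ih =>
      rw [pow_succ', Equiv.Perm.mul_apply]
      rcases ih with ⟨z, hz, h⟩ | ⟨z, hz, h, h'⟩
      · have hz' : g.SameCycle x (g z) := Equiv.Perm.sameCycle_apply_right.2 hz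
        rw [h]
        rcases key z with h1 | ⟨h1, h2⟩
        · exact Or.inl ⟨_, hz', h1⟩
        · exact Or.inr ⟨_, hz', h1, h2⟩
      · rw [h]
        exact Or.inl ⟨z, hz, h'⟩
  obtain ⟨k, -, hk⟩ := (hmax (a.succAbove x) (a.succAbove y)).exists_pow_eq'
  rcases step k with ⟨z, hz, h⟩ | ⟨z, hz, h, -⟩
  · rw [hk] at h
    rwa [Fin.succAbove_right_injective h]
  · rw [hk] at h
    exact absurd h (Fin.succAbove_ne a y)
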